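/- For every solution of the backward Ricci flow system of class U3I0 (case (i)) with λ₂ > λ₃, setting k = λ₁(λ₂−λ₃)/(2√(λ₂λ₃)), one has A'(t) = −4(k² + A(t)²)/A(t)² on [0,T), and hence A(t) − k·arctan(A(t)/k) = λ₁ − k·arctan(λ₁/k) − 4t for all t ∈ [0,T). -/

import Mathlib

open Real Set ENNReal

/-- The time domain `[0, T)` where `T ∈ (0, ∞]` is an extended nonnegative real. -/
def flowDomain (T : ℝ≥0∞) : Set ℝ := {t : ℝ | 0 ≤ t ∧ ENNReal.ofReal t < T}

lemma flowDomain_convex (T : ℝ≥0∞) : Convex ℝ (flowDomain T) := by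
  have : (flowDomain T).OrdConnected := by
    refine ⟨fun x hx y hy z hz => ⟨hx.1.trans hz.1, ?_⟩⟩
    exact lt_of_le_of_lt (ENNReal.ofReal_le_ofReal hz.2) hy.2
  exact this.convex

lemma flowDomain_const (T : ℝ≥0∞) (hT : 0 < T) (f : ℝ → ℝ)
    (hf : ∀ t ∈ flowDomain T, HasDerivWithinAt f 0 (flowDomain T) t) :
    ∀ t ∈ flowDomain T, f t = f 0 := by
  intro t ht
  have h0 : (0 : ℝ) ∈ flowDomain T := ⟨le_rfl, by simpa using hT⟩
  have := (flowDomain_convex T).norm_image_sub_le_of_norm_hasDerivWithin_le (C := 0)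
    hf (by simp) h0 ht
  rw [zero_mul, norm_le_zero_iff, sub_eq_zero] at this
  exact this

/-- For every solution of the backward Ricci flow system of class `U3I0`, case (i), with
`λ₂ > λ₃`, setting `k = λ₁(λ₂−λ₃)/(2√(λ₂λ₃))`, one has `A' = −4(k² + A²)/A²` on `[0,T)`,
and hence `A(t) − k·arctan(A(t)/k) = λ₁ − k·arctan(λ₁/k) − 4t` for all `t ∈ [0,T)`. -/
theorem stmt9 (T : ℝ≥0∞) (hT : 0 < T)
    (lam1 lam2 lam3 lam4 : ℝ)
    (hlam1 : 0 < lam1) (hlam2 : 0 < lam2) (hlam3 : 0 < lam3) (hlam4 : 0 < lam4)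
    (hlt : lam3 < lam2)
    (A B C D : ℝ → ℝ)
    (hpos : ∀ t ∈ flowDomain T, 0 < A t ∧ 0 < B t ∧ 0 < C t ∧ 0 < D t)
    (hA : ∀ t ∈ flowDomain T,
      HasDerivWithinAt A (-(B t / C t) - C t / B t - 2) (flowDomain T) t)
    (hB : ∀ t ∈ flowDomain T,
      HasDerivWithinAt B (-(C t / A t) - D t / C t + B t ^ 2 / (A t * C t)) (flowDomain T) t)
    (hC : ∀ t ∈ flowDomain T,
      HasDerivWithinAt C (-(B t / A t) - D t / B t + C t ^ 2 / (A t * B t)) (flowDomain T) t)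
    (hD : ∀ t ∈ flowDomain T,
      HasDerivWithinAt D (D t ^ 2 / (B t * C t)) (flowDomain T) t)
    (hA0 : A 0 = lam1) (hB0 : B 0 = lam2) (hC0 : C 0 = lam3) (hD0 : D 0 = lam4)
    (k : ℝ) (hk : k = lam1 * (lam2 - lam3) / (2 * Real.sqrt (lam2 * lam3))) :
    ∀ t ∈ flowDomain T,
      HasDerivWithinAt A (-4 * (k ^ 2 + A t ^ 2) / A t ^ 2) (flowDomain T) t ∧
      A t - k * Real.arctan (A t / k) = lam1 - k * Real.arctan (lam1 / k) - 4 * t := by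
  have hkpos : 0 < k := by
    rw [hk]
    have : 0 < lam2 - lam3 := sub_pos.2 hlt
    positivity
  have hk2 : 4 * k ^ 2 = lam1 ^ 2 * (lam2 - lam3) ^ 2 / (lam2 * lam3) := by
    rw [hk, div_pow, mul_pow, mul_pow, Real.sq_sqrt (by positivity)]
    field_simp
    ring
  have hF : ∀ t ∈ flowDomain T, A t ^ 2 * (B t - C t) ^ 2 / (B t * C t) = 4 * k ^ 2 := by
    intro t ht
    rw [hk2, ← hA0, ← hB0, ← hC0]
    refine flowDomain_const T hT (fun t => A t ^ 2 * (B t - C t) ^ 2 / (B t * C t)) ?_ t ht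
    intro s hs
    obtain ⟨a, b, c, d⟩ := hpos s hs
    have hd := (((hA s hs).pow 2).mul (((hB s hs).sub (hC s hs)).pow 2)).div
      ((hB s hs).mul (hC s hs)) (mul_pos b c).ne'
    refine hd.congr_deriv ?_
    simp only [Pi.mul_apply, Pi.pow_apply, Pi.sub_apply]
    field_simp
    push_cast
    ring
  have hA' : ∀ t ∈ flowDomain T,
      HasDerivWithinAt A (-4 * (k ^ 2 + A t ^ 2) / A t ^ 2) (flowDomain T) t := by
    intro t ht
    obtain ⟨a, b, c, d⟩ := hpos t ht
    refine (hA t ht).congr_deriv ?_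
    have h := hF t ht
    have e : -4 * (k ^ 2 + A t ^ 2) / A t ^ 2 = -(4 * k ^ 2) / A t ^ 2 - 4 := by
      field_simp
      ring
    rw [e, ← h]
    field_simp
    ring
  intro t ht
  refine ⟨hA' t ht, ?_⟩
  have hG := flowDomain_const T hT (fun t => A t - k * Real.arctan (A t / k) + 4 * t) (by
    intro s hs
    obtain ⟨a, b, c, d⟩ := hpos s hs
    have hd := ((hA' s hs).sub ((((hA' s hs).div_const k).arctan).const_mul k)).add
      ((hasDerivWithinAt_id s (flowDomain T)).const_mul 4)
    refine hd.congr_deriv ?_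
    have : k ^ 2 + A s ^ 2 ≠ 0 := by positivity
    field_simp
    ring) t ht
  simp only [hA0] at hG
  linarith
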